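/- Let g, ψ : ℝ → ℂ be Schwartz functions and let Δ ⊆ ℝ be a Borel set. Denote by ĥ(k) = (2π)^{−1/2} ∫_ℝ e^{−ikx} h(x) dx the Fourier transform. Then (1/(2π)) ∫_{ℝ×Δ} |∫_ℝ e^{−ip(x−q)} conj(g(x−q)) ψ(x) dx|² d(q,p) = ∫_ℝ (1_Δ ∗ |ĝ|²)(k) |ψ̂(k)|² dk, where (1_Δ ∗ |ĝ|²)(k) = ∫_Δ |ĝ(k−y)|² dy. In other words, the momentum marginal of the phase-space observable generated by g is the smearing of the momentum observable by the convolution kernel 1_Δ ∗ |ĝ|². -/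

import Mathlib

open MeasureTheory

noncomputable section

/-- The Fourier transform with the normalization `ĥ(k) = (2π)^{−1/2} ∫ e^{−ikx} h(x) dx`. -/
def fourierT (h : ℝ → ℂ) (k : ℝ) : ℂ :=
  ((Real.sqrt (2 * Real.pi))⁻¹ : ℝ) *
    ∫ x : ℝ, Complex.exp (-(Complex.I * (k : ℂ) * (x : ℂ))) * h x

open FourierTransform

lemma expTG (p : ℝ) : (fun y : ℝ => Complex.exp ((Complex.I * p) * y)).HasTemperateGrowth := by
  have hd : ∀ n : ℕ, iteratedDeriv n (fun y : ℝ => Complex.exp ((Complex.I * p) * y)) =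
      fun y : ℝ => (Complex.I * p) ^ n * Complex.exp ((Complex.I * p) * y) := by
    intro n
    induction n with
    | zero => simp
    | succ n ih =>
      rw [iteratedDeriv_succ, ih]
      funext y
      have h1 : HasDerivAt (fun y : ℝ => (Complex.I * p) * (y : ℂ)) (Complex.I * p) y := by
        simpa using (Complex.ofRealCLM.hasDerivAt (x := y)).const_mul (Complex.I * (p : ℂ))
      have := (h1.cexp.const_mul ((Complex.I * (p : ℂ)) ^ n)).deriv
      rw [this]; ring
  refine ⟨?_, ?_⟩
  · have : ContDiff ℝ ⊤ (fun y : ℝ => (y : ℂ)) := Complex.ofRealCLM.contDiff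
    exact (ContDiff.cexp (contDiff_const.mul (Complex.ofRealCLM.contDiff)))
  · intro n
    refine ⟨0, |p| ^ n, fun x => ?_⟩
    rw [norm_iteratedFDeriv_eq_norm_iteratedDeriv, hd]
    have : ‖Complex.exp (Complex.I * p * x)‖ = 1 := by
      rw [Complex.norm_exp]; simp
    simp [this]

lemma exists_h (g : SchwartzMap ℝ ℂ) (p : ℝ) : ∃ h : SchwartzMap ℝ ℂ, ∀ y : ℝ,
    h y = Complex.exp ((Complex.I * p) * y) * (starRingEnd ℂ) (g (-y)) := by
  refine ⟨SchwartzMap.smulLeftCLM ℂ (fun y : ℝ => Complex.exp ((Complex.I * p) * y))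
    (SchwartzMap.postcompCLM (𝕜 := ℝ) (Complex.conjCLE : ℂ →L[ℝ] ℂ)
      (SchwartzMap.compCLMOfContinuousLinearEquiv ℝ (ContinuousLinearEquiv.neg ℝ) g)), fun y => ?_⟩
  rw [SchwartzMap.smulLeftCLM_apply_apply (expTG p)]
  simp

lemma fourier_eq (f : ℝ → ℂ) (ξ : ℝ) :
    𝓕 f ξ = (Real.sqrt (2 * Real.pi) : ℂ) * fourierT f (2 * Real.pi * ξ) := by
  have : (Real.sqrt (2 * Real.pi) : ℂ) ≠ 0 := by
    exact_mod_cast (Real.sqrt_pos.2 (by positivity)).ne'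
  rw [fourierT, Complex.ofReal_inv, mul_inv_cancel_left₀ this,
    Real.fourier_real_eq_integral_exp_smul]
  refine integral_congr_ae (.of_forall fun x => ?_)
  simp only [smul_eq_mul]
  congr 2
  push_cast; ring

lemma fourierT_h (g h : SchwartzMap ℝ ℂ) (p : ℝ) (hh : ∀ y : ℝ,
    h y = Complex.exp ((Complex.I * p) * y) * (starRingEnd ℂ) (g (-y))) (k : ℝ) :
    fourierT h k = (starRingEnd ℂ) (fourierT g (k - p)) := by
  simp only [fourierT, map_mul, Complex.conj_ofReal]
  congr 1
  rw [← integral_conj, ← integral_neg_eq_self]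
  refine integral_congr_ae (.of_forall fun x => ?_)
  simp only [hh, map_mul, ← Complex.exp_conj, neg_neg, ← mul_assoc, ← Complex.exp_add]
  congr 2
  simp; ring

lemma lint_scale (F : ℝ → ENNReal) (hF : Measurable F) :
    ∫⁻ k, F k = ENNReal.ofReal (2 * Real.pi) * ∫⁻ ξ, F (2 * Real.pi * ξ) := by
  have h0 : (2 * Real.pi) ≠ 0 := by positivity
  have := Real.smul_map_volume_mul_left h0
  conv_lhs => rw [← this]
  rw [lintegral_smul_measure, lintegral_map hF (by fun_prop), abs_of_pos (by positivity)]
  rfl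

lemma lint_sq (f : SchwartzMap ℝ ℂ) :
    ∫⁻ x, ENNReal.ofReal (‖f x‖ ^ 2) = ∫⁻ ξ, ENNReal.ofReal (‖𝓕 (f : ℝ → ℂ) ξ‖ ^ 2) := by
  have hi : ∀ f : SchwartzMap ℝ ℂ, Integrable (fun x => ‖f x‖ ^ 2) := fun f =>
    (memLp_two_iff_integrable_sq_norm f.continuous.aestronglyMeasurable).1 (f.memLp 2)
  rw [← ofReal_integral_eq_lintegral_ofReal (hi f) (.of_forall fun x => by positivity),
    ← SchwartzMap.fourier_coe,
    ← ofReal_integral_eq_lintegral_ofReal (hi (𝓕 f)) (.of_forall fun x => by positivity),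
    SchwartzMap.integral_norm_sq_fourier]

lemma fourierT_cont (f : SchwartzMap ℝ ℂ) : Continuous (fourierT f) := by
  have h2 : (Real.sqrt (2 * Real.pi) : ℂ) ≠ 0 := by
    exact_mod_cast (Real.sqrt_pos.2 (by positivity)).ne'
  have : fourierT f = fun k => (Real.sqrt (2 * Real.pi) : ℂ)⁻¹ * (𝓕 f) (k / (2 * Real.pi)) := by
    funext k
    rw [SchwartzMap.fourier_coe, fourier_eq, inv_mul_cancel_left₀ h2]
    congr 1
    field_simp
  rw [this]
  exact continuous_const.mul ((𝓕 f).continuous.comp (by fun_prop))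

lemma slice (g ψ : SchwartzMap ℝ ℂ) (p : ℝ) :
    ∫⁻ q : ℝ, ENNReal.ofReal
        (‖∫ x : ℝ, Complex.exp (-(Complex.I * (p : ℂ) * ((x : ℂ) - (q : ℂ)))) *
            (starRingEnd ℂ) (g (x - q)) * ψ x‖ ^ 2) =
      ENNReal.ofReal (2 * Real.pi) *
        ∫⁻ k : ℝ, ENNReal.ofReal (‖fourierT (⇑g) (k - p)‖ ^ 2) *
          ENNReal.ofReal (‖fourierT (⇑ψ) k‖ ^ 2) := by
  obtain ⟨h, hh⟩ := exists_h g p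
  have hc : ∀ q : ℝ, ∫ x : ℝ, Complex.exp (-(Complex.I * (p : ℂ) * ((x : ℂ) - (q : ℂ)))) *
            (starRingEnd ℂ) (g (x - q)) * ψ x =
      SchwartzMap.convolution (ContinuousLinearMap.mul ℂ ℂ) ψ h q := by
    intro q
    rw [SchwartzMap.convolution_apply, convolution]
    refine integral_congr_ae (.of_forall fun x => ?_)
    simp only [hh, ContinuousLinearMap.mul_apply']
    rw [mul_comm, neg_sub]
    congr 3
    push_cast; ring
  simp_rw [hc]
  rw [lint_sq, lint_scale (fun k : ℝ => ENNReal.ofReal (‖fourierT (⇑g) (k - p)‖ ^ 2) *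
          ENNReal.ofReal (‖fourierT (⇑ψ) k‖ ^ 2)) (by
    have := fourierT_cont g
    have := fourierT_cont ψ
    fun_prop), ← mul_assoc, ← lintegral_const_mul _ (by
    have := fourierT_cont g
    have := fourierT_cont ψ
    fun_prop)]
  refine lintegral_congr fun ξ => ?_
  rw [← SchwartzMap.fourier_coe, SchwartzMap.fourier_convolution, SchwartzMap.pairing_apply_apply,
    SchwartzMap.fourier_coe, SchwartzMap.fourier_coe, fourier_eq, fourier_eq, fourierT_h g h p hh,
    ← ENNReal.ofReal_mul (by positivity), ← ENNReal.ofReal_mul (by positivity),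
    ← ENNReal.ofReal_mul (by positivity)]
  congr 1
  have : √(2 * Real.pi) ^ 2 = 2 * Real.pi := Real.sq_sqrt (by positivity)
  simp only [ContinuousLinearMap.mul_apply', norm_mul, RCLike.norm_conj, Complex.norm_real,
    Real.norm_eq_abs, mul_pow, sq_abs, this]
  ring

/-- For Schwartz functions `g, ψ` and a Borel set `Δ ⊆ ℝ`,
`(1/2π) ∫_{ℝ×Δ} |⟨U_{q,p} g, ψ⟩|² d(q,p) = ∫ (1_Δ ∗ |ĝ|²)(k) |ψ̂(k)|² dk`:
the momentum marginal of the phase-space observable generated by `g` is the smearing of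
the momentum observable by the convolution kernel `1_Δ ∗ |ĝ|²`. -/
theorem momentum_marginal_of_phase_space_observable
    (g ψ : SchwartzMap ℝ ℂ) (Δ : Set ℝ) (hΔ : MeasurableSet Δ) :
    ∫⁻ z in (Set.univ : Set ℝ) ×ˢ Δ, ENNReal.ofReal
        (‖∫ x : ℝ, Complex.exp (-(Complex.I * (z.2 : ℂ) * ((x : ℂ) - (z.1 : ℂ)))) *
            (starRingEnd ℂ) (g (x - z.1)) * ψ x‖ ^ 2) =
      ENNReal.ofReal (2 * Real.pi) *
        ∫⁻ k : ℝ, (∫⁻ y in Δ, ENNReal.ofReal (‖fourierT (⇑g) (k - y)‖ ^ 2)) *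
          ENNReal.ofReal (‖fourierT (⇑ψ) k‖ ^ 2) := by
  have hg := fourierT_cont g
  have hψ := fourierT_cont ψ
  have hgc := g.continuous
  have hψc := ψ.continuous
  have hm : Measurable (fun z : ℝ × ℝ => ENNReal.ofReal
        (‖∫ x : ℝ, Complex.exp (-(Complex.I * (z.2 : ℂ) * ((x : ℂ) - (z.1 : ℂ)))) *
            (starRingEnd ℂ) (g (x - z.1)) * ψ x‖ ^ 2)) := by
    have : StronglyMeasurable (fun z : ℝ × ℝ =>
        ∫ x : ℝ, Complex.exp (-(Complex.I * (z.2 : ℂ) * ((x : ℂ) - (z.1 : ℂ)))) *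
            (starRingEnd ℂ) (g (x - z.1)) * ψ x) := by
      apply StronglyMeasurable.integral_prod_right'
        (f := fun w : (ℝ × ℝ) × ℝ =>
          Complex.exp (-(Complex.I * (w.1.2 : ℂ) * ((w.2 : ℂ) - (w.1.1 : ℂ)))) *
            (starRingEnd ℂ) (g (w.2 - w.1.1)) * ψ w.2)
      apply Continuous.stronglyMeasurable
      have := Complex.continuous_conj
      fun_prop
    have := this.measurable
    fun_prop
  rw [Measure.volume_eq_prod, ← Measure.prod_restrict, Measure.restrict_univ,
    lintegral_prod_symm' _ hm]
  simp_rw [slice]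
  rw [lintegral_const_mul' _ _ ENNReal.ofReal_ne_top]
  congr 1
  rw [lintegral_lintegral_swap (by
    apply Measurable.aemeasurable
    unfold Function.uncurry
    fun_prop)]
  refine lintegral_congr fun k => ?_
  rw [lintegral_mul_const _ (by fun_prop)]
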